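/- arXiv:2003.14141 — 4 statements merged into one kernel-verified Lean document; each statement's English description precedes it below -/
import Mathlib

section
/- Let ρ > 0, μ > 0 and a < 0 < b be real numbers. For p ∈ ℝ define λ(p) = Proj_{[-1,1]}(-p/μ) and F(p) = Proj_{[a,b]}( -(1/ρ)( p + μ λ(p) ) ). Then F(p) = 0 if and only if |p| ≤ μ. -/
/-- Projection onto the interval `[α, β]`: `Proj α β q = max α (min q β)`. -/
def Proj (α β q : ℝ) : ℝ := max α (min q β)

/-!
Since `0` is interior to `[a, b]`, the outer projection vanishes only where its argument does.
Scaling the inner projection by `μ` turns `p + μ λ(p)` into `p + Proj_{[-μ, μ]}(-p)`, the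
soft thresholding of `p` at level `μ`; it vanishes exactly when the projection fixes `-p`.
-/

theorem proj_eq_iff_of_mem_Ioo {α β q r : ℝ} (hr : r ∈ Set.Ioo α β) :
    Proj α β q = r ↔ q = r := by
  obtain ⟨hαr, hrβ⟩ := hr
  unfold Proj
  grind

theorem proj_eq_self_iff {α β q : ℝ} (h : α ≤ β) : Proj α β q = q ↔ q ∈ Set.Icc α β := by
  constructor
  · intro hq
    rw [← hq]
    exact ⟨le_max_left _ _, max_le h (min_le_right _ _)⟩
  · rintro ⟨hαq, hqβ⟩
    rw [Proj, min_eq_left hqβ, max_eq_right hαq]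

theorem mul_proj_of_nonneg {c : ℝ} (hc : 0 ≤ c) (α β q : ℝ) :
    c * Proj α β q = Proj (c * α) (c * β) (c * q) := by
  simp only [Proj, mul_max_of_nonneg _ _ hc, mul_min_of_nonneg _ _ hc]

theorem add_proj_neg_eq_zero_iff_abs_le {μ : ℝ} (hμ : 0 ≤ μ) (p : ℝ) :
    p + Proj (-μ) μ (-p) = 0 ↔ |p| ≤ μ := by
  rw [add_eq_zero_iff_eq_neg', proj_eq_self_iff (neg_le_self hμ), Set.mem_Icc, ← abs_le, abs_neg]

theorem stmt_0 (ρ μ a b : ℝ) (hρ : 0 < ρ) (hμ : 0 < μ) (ha : a < 0) (hb : 0 < b) (p : ℝ) :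
    Proj a b (-(1/ρ) * (p + μ * Proj (-1) 1 (-p/μ))) = 0 ↔ |p| ≤ μ := by
  have hscale : -(1/ρ) ≠ 0 := neg_ne_zero.mpr (one_div_pos.mpr hρ).ne'
  have hthreshold : μ * Proj (-1) 1 (-p/μ) = Proj (-μ) μ (-p) := by
    rw [mul_proj_of_nonneg hμ.le, mul_neg_one, mul_one, mul_div_cancel₀ _ hμ.ne']
  rw [proj_eq_iff_of_mem_Ioo ⟨ha, hb⟩, mul_eq_zero_iff_left hscale, hthreshold,
    add_proj_neg_eq_zero_iff_abs_le hμ.le]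
end

section
/- Let ρ > 0, μ > 0 and a < 0 < b be real numbers, and let p ∈ ℝ. Suppose z ∈ [a,b] and λ ∈ ℝ are such that λ is sign-compatible with z (i.e. λ = 1 if z > 0, λ = -1 if z < 0, and λ ∈ [-1,1] if z = 0) and (p + ρz + μλ)(v - z) ≥ 0 for all v ∈ [a,b]. Then λ = Proj_{[-1,1]}(-p/μ). -/
/-- `lam` is sign-compatible with `z`, i.e. `lam ∈ ∂|·|(z)`. -/
def SignCompat (lam z : ℝ) : Prop :=
  (0 < z → lam = 1) ∧ (z < 0 → lam = -1) ∧ (z = 0 → lam ∈ Set.Icc (-1 : ℝ) 1)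

/-! Since `0` is interior to `[a, b]`, the normal cone to `[a, b]` at `z` lies in the ray
`{t * z | 0 ≤ t}`. The variational inequality therefore makes `-p / μ - lam` a nonnegative multiple
of `z`. Dually, `lam ∈ ∂|·|(z)` says that `z` is normal to `[-1, 1]` at `lam`, so adding such a
multiple to `lam` does not change its projection. -/

open Set

namespace Proj

variable {α β q : ℝ}

theorem eq_left_of_le (hq : q ≤ α) : Proj α β q = α :=
  max_eq_left ((min_le_left q β).trans hq)

theorem eq_right_of_le (hαβ : α ≤ β) (hq : β ≤ q) : Proj α β q = β := by
  rw [Proj, min_eq_right hq, max_eq_right hαβ]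

theorem eq_self_of_mem (hq : q ∈ Icc α β) : Proj α β q = q := by
  rw [Proj, min_eq_left hq.2, max_eq_right hq.1]

end Proj

theorem SignCompat.proj_add_mul_eq {lam z t : ℝ} (h : SignCompat lam z) (ht : 0 ≤ t) :
    Proj (-1) 1 (lam + t * z) = lam := by
  obtain ⟨h_pos, h_neg, h_zero⟩ := h
  rcases lt_trichotomy z 0 with hz | hz | hz
  · rw [h_neg hz]
    exact Proj.eq_left_of_le (add_le_of_nonpos_right (mul_nonpos_of_nonneg_of_nonpos ht hz.le))
  · rw [hz, mul_zero, add_zero]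
    exact Proj.eq_self_of_mem (h_zero hz)
  · rw [h_pos hz]
    exact Proj.eq_right_of_le (by norm_num) (le_add_of_nonneg_right (mul_nonneg ht hz.le))

theorem exists_nonneg_neg_eq_mul_of_forall_mem_Icc {K : Type*} [Field K] [LinearOrder K]
    [IsStrictOrderedRing K] {a b d z : K} (ha : a < 0) (hb : 0 < b)
    (h : ∀ v ∈ Icc a b, 0 ≤ d * (v - z)) : ∃ t, 0 ≤ t ∧ -d = t * z := by
  rcases eq_or_ne z 0 with rfl | hz
  · simp only [sub_zero] at h
    have hd_nonpos : d ≤ 0 :=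
      nonpos_of_mul_nonneg_left (h a (left_mem_Icc.2 (ha.trans hb).le)) ha
    have hd_nonneg : 0 ≤ d :=
      nonneg_of_mul_nonneg_left (h b (right_mem_Icc.2 (ha.trans hb).le)) hb
    exact ⟨0, le_rfl, by rw [le_antisymm hd_nonpos hd_nonneg, neg_zero, zero_mul]⟩
  · have hdz : 0 ≤ -d * z := by simpa using h 0 ⟨ha.le, hb.le⟩
    exact ⟨-d / z, div_nonneg_iff.2 (mul_nonneg_iff.1 hdz), (div_mul_cancel₀ _ hz).symm⟩

theorem stmt_8 (ρ μ a b : ℝ) (hρ : 0 < ρ) (hμ : 0 < μ) (ha : a < 0) (hb : 0 < b)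
    (p z lam : ℝ) (hz : z ∈ Set.Icc a b) (hsc : SignCompat lam z)
    (hvi : ∀ v ∈ Set.Icc a b, 0 ≤ (p + ρ * z + μ * lam) * (v - z)) :
    lam = Proj (-1) 1 (-p/μ) := by
  obtain ⟨t, ht, hd⟩ := exists_nonneg_neg_eq_mul_of_forall_mem_Icc ha hb hvi
  have hp : -p / μ = lam + (t + ρ) / μ * z := by
    field_simp
    linarith
  rw [hp, hsc.proj_add_mul_eq (by positivity)]
end

section
/- Let ρ > 0, μ > 0 and a < 0 < b be real numbers, and let p ∈ ℝ. Suppose (z₁, λ₁) and (z₂, λ₂) are two pairs such that for i = 1, 2: zᵢ ∈ [a,b], λᵢ is sign-compatible with zᵢ (λᵢ = 1 if zᵢ > 0, λᵢ = -1 if zᵢ < 0, λᵢ ∈ [-1,1] if zᵢ = 0), and (p + ρzᵢ + μλᵢ)(v - zᵢ) ≥ 0 for all v ∈ [a,b]. Then z₁ = z₂ and λ₁ = λ₂. -/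
/-!
The subdifferential of `|·|` is monotone, so `z ↦ f z + μ ∂|·|(z)` is strictly monotone whenever `f`
is (here `f z = p + ρ z`), and testing each of two variational inequalities with the solution of the
other forces `z₁ = z₂`. Away from zero, `∂|·|(z)` is a singleton. At `z = 0` there are admissible
points on both sides, so the variational inequality becomes the equation `f 0 + μ λ = 0`, which
determines `λ`.
-/

section OrderedRing

variable {R : Type*} [Ring R] [LinearOrder R] [IsStrictOrderedRing R]

theorem eq_of_variationalInequality_of_strictMono {z w g h : R}
    (hlt : z < w → g < h) (hgt : w < z → h < g)
    (hz : 0 ≤ g * (w - z)) (hw : 0 ≤ h * (z - w)) : z = w := by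
  rcases lt_trichotomy z w with hzw | hzw | hwz
  · have hg : 0 ≤ g := nonneg_of_mul_nonneg_left hz (sub_pos.2 hzw)
    have hh : h ≤ 0 := nonpos_of_mul_nonneg_left hw (sub_neg.2 hzw)
    exact absurd (hlt hzw) (hh.trans hg).not_gt
  · exact hzw
  · have hg : g ≤ 0 := nonpos_of_mul_nonneg_left hz (sub_neg.2 hwz)
    have hh : 0 ≤ h := nonneg_of_mul_nonneg_left hw (sub_pos.2 hwz)
    exact absurd (hgt hwz) (hg.trans hh).not_gt

theorem eq_zero_of_mul_nonneg_of_neg_of_pos {c u v : R} (hu : u < 0) (hv : 0 < v)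
    (hcu : 0 ≤ c * u) (hcv : 0 ≤ c * v) : c = 0 :=
  le_antisymm (nonpos_of_mul_nonneg_left hcu hu) (nonneg_of_mul_nonneg_left hcv hv)

end OrderedRing

namespace SignCompat

variable {lam lam' z w : ℝ}

theorem mem_Icc (h : SignCompat lam z) : lam ∈ Set.Icc (-1 : ℝ) 1 := by
  rcases lt_trichotomy z 0 with hz | hz | hz
  · norm_num [h.2.1 hz]
  · exact h.2.2 hz
  · norm_num [h.1 hz]

theorem le_of_lt (h : SignCompat lam z) (h' : SignCompat lam' w) (hzw : z < w) : lam ≤ lam' := by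
  rcases lt_or_ge z 0 with hz | hz
  · exact (h.2.1 hz).trans_le h'.mem_Icc.1
  · exact h.mem_Icc.2.trans_eq (h'.1 (hz.trans_lt hzw)).symm

theorem eq_of_ne_zero (h : SignCompat lam z) (h' : SignCompat lam' z) (hz : z ≠ 0) :
    lam = lam' := by
  rcases hz.lt_or_gt with hz | hz
  · rw [h.2.1 hz, h'.2.1 hz]
  · rw [h.1 hz, h'.1 hz]

theorem add_mul_lt_add_mul {K : Set ℝ} {f : ℝ → ℝ} (hf : StrictMonoOn f K) {μ : ℝ} (hμ : 0 ≤ μ)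
    (hz : z ∈ K) (hw : w ∈ K) (h : SignCompat lam z) (h' : SignCompat lam' w) (hzw : z < w) :
    f z + μ * lam < f w + μ * lam' :=
  add_lt_add_of_lt_of_le (hf hz hw hzw) (mul_le_mul_of_nonneg_left (h.le_of_lt h' hzw) hμ)

end SignCompat

theorem stmt_9_general {K : Set ℝ} (hK : 0 ∈ K → (∃ u ∈ K, u < 0) ∧ ∃ v ∈ K, 0 < v)
    {f : ℝ → ℝ} (hf : StrictMonoOn f K) {μ : ℝ} (hμ : 0 < μ) {z₁ lam₁ z₂ lam₂ : ℝ}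
    (hz₁ : z₁ ∈ K) (hsc₁ : SignCompat lam₁ z₁)
    (hvi₁ : ∀ v ∈ K, 0 ≤ (f z₁ + μ * lam₁) * (v - z₁))
    (hz₂ : z₂ ∈ K) (hsc₂ : SignCompat lam₂ z₂)
    (hvi₂ : ∀ v ∈ K, 0 ≤ (f z₂ + μ * lam₂) * (v - z₂)) :
    z₁ = z₂ ∧ lam₁ = lam₂ := by
  obtain rfl : z₁ = z₂ := eq_of_variationalInequality_of_strictMono
    (hsc₁.add_mul_lt_add_mul hf hμ.le hz₁ hz₂ hsc₂)
    (hsc₂.add_mul_lt_add_mul hf hμ.le hz₂ hz₁ hsc₁) (hvi₁ z₂ hz₂) (hvi₂ z₁ hz₁)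
  refine ⟨rfl, ?_⟩
  rcases eq_or_ne z₁ 0 with rfl | hne
  · obtain ⟨⟨u, huK, hu⟩, v, hvK, hv⟩ := hK hz₁
    simp only [sub_zero] at hvi₁ hvi₂
    have stationary₁ : f 0 + μ * lam₁ = 0 :=
      eq_zero_of_mul_nonneg_of_neg_of_pos hu hv (hvi₁ u huK) (hvi₁ v hvK)
    have stationary₂ : f 0 + μ * lam₂ = 0 :=
      eq_zero_of_mul_nonneg_of_neg_of_pos hu hv (hvi₂ u huK) (hvi₂ v hvK)
    exact mul_left_cancel₀ hμ.ne' (add_left_cancel (stationary₁.trans stationary₂.symm))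
  · exact hsc₁.eq_of_ne_zero hsc₂ hne

theorem stmt_9 (ρ μ a b : ℝ) (hρ : 0 < ρ) (hμ : 0 < μ) (ha : a < 0) (hb : 0 < b)
    (p z₁ lam₁ z₂ lam₂ : ℝ)
    (hz₁ : z₁ ∈ Set.Icc a b) (hsc₁ : SignCompat lam₁ z₁)
    (hvi₁ : ∀ v ∈ Set.Icc a b, 0 ≤ (p + ρ * z₁ + μ * lam₁) * (v - z₁))
    (hz₂ : z₂ ∈ Set.Icc a b) (hsc₂ : SignCompat lam₂ z₂)
    (hvi₂ : ∀ v ∈ Set.Icc a b, 0 ≤ (p + ρ * z₂ + μ * lam₂) * (v - z₂)) :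
    z₁ = z₂ ∧ lam₁ = lam₂ :=
  have hab : a ≤ b := (ha.trans hb).le
  stmt_9_general (f := fun z ↦ p + ρ * z)
    (fun _ ↦ ⟨⟨a, Set.left_mem_Icc.2 hab, ha⟩, b, Set.right_mem_Icc.2 hab, hb⟩)
    (((strictMono_mul_left_of_pos hρ).const_add p).strictMonoOn _)
    hμ hz₁ hsc₁ hvi₁ hz₂ hsc₂ hvi₂
end

section
/- Let ρ > 0, μ > 0 and a < 0 < b be real numbers, and let p ∈ ℝ. For z, λ ∈ ℝ, the following are equivalent: (1) z ∈ [a,b], λ is sign-compatible with z (λ = 1 if z > 0, λ = -1 if z < 0, λ ∈ [-1,1] if z = 0), and (p + ρz + μλ)(v - z) ≥ 0 for all v ∈ [a,b]; (2) λ = Proj_{[-1,1]}(-p/μ) and z = Proj_{[a,b]}( -(1/ρ)( p + μ Proj_{[-1,1]}(-p/μ) ) ). -/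
/-!
For `ρ > 0` the variational inequality says `z = Proj a b q` with `q = -(1/ρ) * (p + μ * lam)`.
Because `a < 0 < b`, projecting onto `[a, b]` keeps the sign of `q`, and sign-compatibility only
sees signs. Now `q` is a positive multiple of `-p/μ - lam`, and `lam ∈ ∂|·|(t - lam)` says exactly
that `lam` is the projection of `t` onto `[-1, 1]`: the subdifferential of `|·|` is inverse to the
normal cone of `[-1, 1]`.
-/

section Projection

variable {α β q v x c ρ : ℝ}

theorem proj_of_le_left (hq : q ≤ α) : Proj α β q = α :=
  max_eq_left (min_le_of_left_le hq)

theorem proj_of_right_le (h : α ≤ β) (hq : β ≤ q) : Proj α β q = β := by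
  rw [Proj, min_eq_right hq, max_eq_right h]

theorem proj_of_mem (hq : q ∈ Set.Icc α β) : Proj α β q = q := by
  rw [Proj, min_eq_left hq.2, max_eq_right hq.1]

theorem proj_eq_left_of_lt_proj (hq : q < Proj α β q) : Proj α β q = α :=
  proj_of_le_left <| le_of_not_ge fun hαq ↦ hq.not_ge (max_le hαq (min_le_left _ _))

theorem proj_eq_right_of_proj_lt (h : α ≤ β) (hq : Proj α β q < q) : Proj α β q = β :=
  proj_of_right_le h <| le_of_not_ge fun hqβ ↦ hq.not_ge (le_max_of_le_right (le_min le_rfl hqβ))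

theorem proj_mem_Icc (h : α ≤ β) (q : ℝ) : Proj α β q ∈ Set.Icc α β :=
  ⟨le_max_left _ _, max_le h (min_le_right _ _)⟩

theorem proj_sub_mul_sub_proj_nonneg (q : ℝ) (hv : v ∈ Set.Icc α β) :
    0 ≤ (Proj α β q - q) * (v - Proj α β q) := by
  rcases le_total q α with hqα | hαq
  · rw [proj_of_le_left hqα]
    exact mul_nonneg (sub_nonneg.2 hqα) (sub_nonneg.2 hv.1)
  rcases le_total q β with hqβ | hβq
  · rw [proj_of_mem ⟨hαq, hqβ⟩, sub_self, zero_mul]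
  · rw [proj_of_right_le (hv.1.trans hv.2) hβq]
    exact mul_nonneg_of_nonpos_of_nonpos (sub_nonpos.2 hβq) (sub_nonpos.2 hv.2)

theorem eq_proj_iff_variational_inequality (h : α ≤ β) :
    x = Proj α β q ↔ x ∈ Set.Icc α β ∧ ∀ v ∈ Set.Icc α β, 0 ≤ (x - q) * (v - x) := by
  constructor
  · rintro rfl
    exact ⟨proj_mem_Icc h q, fun v hv ↦ proj_sub_mul_sub_proj_nonneg q hv⟩
  · rintro ⟨hx, hvar⟩
    -- Test each inequality with the other solution and add: the sum is `-(x - Proj α β q) ^ 2`.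
    have hx_test := hvar _ (proj_mem_Icc h q)
    have hproj_test := proj_sub_mul_sub_proj_nonneg q hx
    have hsq : (x - Proj α β q) ^ 2 ≤ 0 := by linarith
    exact sub_eq_zero.1 ((sq_nonpos_iff _).1 hsq)

theorem eq_proj_neg_one_div_mul_iff (h : α ≤ β) (hρ : 0 < ρ) :
    x = Proj α β (-(1 / ρ) * c) ↔
      x ∈ Set.Icc α β ∧ ∀ v ∈ Set.Icc α β, 0 ≤ (c + ρ * x) * (v - x) := by
  have hscale (v : ℝ) : (c + ρ * x) * (v - x) = ρ * ((x - -(1 / ρ) * c) * (v - x)) := by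
    field_simp
    ring
  simp only [eq_proj_iff_variational_inequality h, hscale, mul_nonneg_iff_of_pos_left hρ]

theorem sign_proj (hα : α < 0) (hβ : 0 < β) (q : ℝ) :
    SignType.sign (Proj α β q) = SignType.sign q := by
  rcases lt_trichotomy q 0 with hq | rfl | hq
  · have hproj : Proj α β q < 0 := max_lt hα (min_lt_of_left_lt hq)
    rw [sign_neg hq, sign_neg hproj]
  · rw [proj_of_mem ⟨hα.le, hβ.le⟩]
  · have hproj : 0 < Proj α β q := lt_max_of_lt_right (lt_min hq hβ)
    rw [sign_pos hq, sign_pos hproj]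

end Projection

section SignCompat

variable {lam z w t : ℝ}

theorem signCompat_congr_sign (h : SignType.sign z = SignType.sign w) :
    SignCompat lam z ↔ SignCompat lam w := by
  have hpos : 0 < z ↔ 0 < w := by rw [← sign_eq_one_iff, h, sign_eq_one_iff]
  have hneg : z < 0 ↔ w < 0 := by rw [← sign_eq_neg_one_iff, h, sign_eq_neg_one_iff]
  have hzero : z = 0 ↔ w = 0 := by rw [← sign_eq_zero_iff, h, sign_eq_zero_iff]
  rw [SignCompat, SignCompat, hpos, hneg, hzero]

theorem signCompat_sub_iff_eq_proj :
    SignCompat lam (t - lam) ↔ lam = Proj (-1) 1 t := by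
  have hle : (-1 : ℝ) ≤ 1 := by norm_num
  constructor
  · rintro ⟨hpos, hneg, hzero⟩
    rcases lt_trichotomy lam t with hlt | rfl | hgt
    · obtain rfl := hpos (sub_pos.2 hlt)
      exact (proj_of_right_le hle hlt.le).symm
    · exact (proj_of_mem (hzero (sub_self lam))).symm
    · obtain rfl := hneg (sub_neg.2 hgt)
      exact (proj_of_le_left hgt.le).symm
  · rintro rfl
    exact ⟨fun hpos ↦ proj_eq_right_of_proj_lt hle (sub_pos.1 hpos),
      fun hneg ↦ proj_eq_left_of_lt_proj (sub_neg.1 hneg), fun _ ↦ proj_mem_Icc hle t⟩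

theorem signCompat_proj_iff {ρ μ a b : ℝ} (hρ : 0 < ρ) (hμ : 0 < μ) (ha : a < 0) (hb : 0 < b)
    (p : ℝ) :
    SignCompat lam (Proj a b (-(1 / ρ) * (p + μ * lam))) ↔ lam = Proj (-1) 1 (-p / μ) := by
  have hmul : -(1 / ρ) * (p + μ * lam) = μ / ρ * (-p / μ - lam) := by
    field_simp
    ring
  have hsign : SignType.sign (Proj a b (-(1 / ρ) * (p + μ * lam))) =
      SignType.sign (-p / μ - lam) := by
    rw [sign_proj ha hb, hmul, sign_mul, sign_pos (div_pos hμ hρ), one_mul]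
  rw [signCompat_congr_sign hsign, signCompat_sub_iff_eq_proj]

end SignCompat

theorem stmt_11 (ρ μ a b : ℝ) (hρ : 0 < ρ) (hμ : 0 < μ) (ha : a < 0) (hb : 0 < b)
    (p z lam : ℝ) :
    (z ∈ Set.Icc a b ∧ SignCompat lam z ∧
      ∀ v ∈ Set.Icc a b, 0 ≤ (p + ρ * z + μ * lam) * (v - z)) ↔
    (lam = Proj (-1) 1 (-p/μ) ∧
      z = Proj a b (-(1/ρ) * (p + μ * Proj (-1) 1 (-p/μ)))) := by
  calc
    _ ↔ SignCompat lam z ∧ z = Proj a b (-(1 / ρ) * (p + μ * lam)) := by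
      rw [eq_proj_neg_one_div_mul_iff (ha.trans hb).le hρ, and_left_comm]
      simp only [add_right_comm p]
    _ ↔ lam = Proj (-1) 1 (-p / μ) ∧ z = Proj a b (-(1 / ρ) * (p + μ * lam)) :=
      and_congr_left fun hz ↦ by rw [← signCompat_proj_iff hρ hμ ha hb p, ← hz]
    _ ↔ _ := and_congr_right fun hlam ↦ by rw [← hlam]
end
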